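/- Let f be a ternary cubic form over ℂ with f₃₃₃ ≠ 0 (the coefficient of x₃³) and 4·f₁₁₃·f₂₂₃ − f₁₂₃² ≠ 0, where f₁₁₃, f₁₂₃, f₂₂₃ are the coefficients of x₁²x₃, x₁x₂x₃, x₂²x₃ in f. Let D = det(∂ᵢ∂ⱼ f) be the Hessian determinant of f, let D₃₃₃ be its coefficient of x₃³, and set g = D₃₃₃·f − f₃₃₃·D. Then f is completely reducible if and only if the coefficients of x₁²x₃, x₁x₂x₃ and x₂²x₃ in g are all zero. -/

import Mathlib

open MvPolynomial

/-- The Hessian determinant `det (∂ᵢ∂ⱼ f)` of a ternary form. -/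
noncomputable def hessianDet (f : MvPolynomial (Fin 3) ℂ) : MvPolynomial (Fin 3) ℂ :=
  Matrix.det (Matrix.of fun i j : Fin 3 => pderiv i (pderiv j f))

/-- A linear form is a homogeneous polynomial of degree 1. -/
def IsLinearForm (a : MvPolynomial (Fin 3) ℂ) : Prop := a.IsHomogeneous 1

/-- A cubic form is completely reducible if it is a product of three linear forms. -/
def CompletelyReducible (f : MvPolynomial (Fin 3) ℂ) : Prop :=
  ∃ a b c : MvPolynomial (Fin 3) ℂ,
    IsLinearForm a ∧ IsLinearForm b ∧ IsLinearForm c ∧ f = a * b * c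

open Matrix

/-!
Completing the cube writes `f = k (w³ + w q + c)` with `w = x₃ + m` and binary forms `m`, `q`, `c`
of degrees 1, 2, 3. In these terms the part of `g` linear in `x₃` is `8 k⁴` times
`Δ(q) q - 3 H(c) - 6 T(q, c) m`, where `Δ`, `H`, `T` are the discriminant, the Hessian and the
second transvectant. This expression is covariant under linear changes of `x₁`, `x₂`, and the
hypothesis `4 f₁₁₃ f₂₂₃ - f₁₂₃² ≠ 0` says that `q + 3 m²` is nondegenerate, so in particular
`q ≠ 0`. Hence one may assume `q = -3xy` or `q = -3x²`; if the expression vanishes, then `c` is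
`αx³ + α⁻¹y³` or `αx³`. In both cases `q = -3ps` and `c = p³ + s³` for linear forms `p`, `s`, and
Cardano's identity factors `w³ + w q + c`.

Conversely, the Hessian matrix of a product `abc` of linear forms is `Lᵀ M L`, where the rows of `L`
are the coefficients of `a`, `b`, `c` and `det M = 2abc`. So `D` is a multiple of `f`, and `g = 0`.
-/

section BinaryForms

variable {R : Type*} [CommRing R]

/-- The binary quadratic form whose coefficients of `x²`, `xy`, `y²` are `q 0`, `q 1`, `q 2`.
Forms are handled through such coefficient vectors, so that the covariants below become vectors. -/
def binaryQuadratic (q : Fin 3 → R) (v : Fin 2 → R) : R :=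
  q 0 * v 0 ^ 2 + q 1 * (v 0 * v 1) + q 2 * v 1 ^ 2

/-- The binary cubic form whose coefficients of `x³`, `x²y`, `xy²`, `y³` are `c 0`, …, `c 3`. -/
def binaryCubic (c : Fin 4 → R) (v : Fin 2 → R) : R :=
  c 0 * v 0 ^ 3 + c 1 * (v 0 ^ 2 * v 1) + c 2 * (v 0 * v 1 ^ 2) + c 3 * v 1 ^ 3

/-- The coefficient vector of the product of the binary linear forms `l 0 x + l 1 y` and
`m 0 x + m 1 y`. -/
def linearMul (l m : Fin 2 → R) : Fin 3 → R := ![l 0 * m 0, l 0 * m 1 + l 1 * m 0, l 1 * m 1]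

/-- The Hessian determinant of the binary quadratic form `q`, which is minus its usual
discriminant. -/
def quadraticDisc (q : Fin 3 → R) : R := 4 * q 0 * q 2 - q 1 ^ 2

/-- The Hessian covariant of a binary cubic form, normalised as a quarter of its Hessian
determinant. -/
def cubicHessian (c : Fin 4 → R) : Fin 3 → R :=
  ![3 * c 0 * c 2 - c 1 ^ 2, 9 * c 0 * c 3 - c 1 * c 2, 3 * c 1 * c 3 - c 2 ^ 2]

/-- The second transvectant of a binary quadratic and a binary cubic form, a linear form normalised
as a quarter of `q_xx c_yy - 2 q_xy c_xy + q_yy c_xx`. -/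
def transvectant (q : Fin 3 → R) (c : Fin 4 → R) : Fin 2 → R :=
  ![q 0 * c 2 - q 1 * c 1 + 3 * q 2 * c 0, 3 * q 0 * c 3 - q 1 * c 2 + q 2 * c 1]

/-- The binary quadratic form which, up to the factor 8, is the part linear in `x₃` of
`D₃₃₃ f - f₃₃₃ D` for `f = w³ + w q + c` and `w = x₃ + m`; see
`mixedCoeffs_hessianPencil_depressedCubic`. -/
def hessianResidual (m : Fin 2 → R) (q : Fin 3 → R) (c : Fin 4 → R) : Fin 3 → R :=
  quadraticDisc q • q - (3 : R) • cubicHessian c - (6 : R) • linearMul (transvectant q c) m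

/-- The coefficients of the binary quadratic form `v ↦ q (A v)`. -/
def quadraticSubst (A : Matrix (Fin 2) (Fin 2) R) : (Fin 3 → R) →ₗ[R] Fin 3 → R where
  toFun q :=
    ![binaryQuadratic q (A.col 0),
      2 * q 0 * A 0 0 * A 0 1 + q 1 * (A 0 0 * A 1 1 + A 0 1 * A 1 0) + 2 * q 2 * A 1 0 * A 1 1,
      binaryQuadratic q (A.col 1)]
  map_add' q q' := by ext i; fin_cases i <;> simp [binaryQuadratic] <;> ring
  map_smul' r q := by ext i; fin_cases i <;> simp [binaryQuadratic] <;> ring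

lemma quadraticSubst_apply (A : Matrix (Fin 2) (Fin 2) R) (q : Fin 3 → R) :
    quadraticSubst A q =
      ![binaryQuadratic q (A.col 0),
        2 * q 0 * A 0 0 * A 0 1 + q 1 * (A 0 0 * A 1 1 + A 0 1 * A 1 0) + 2 * q 2 * A 1 0 * A 1 1,
        binaryQuadratic q (A.col 1)] :=
  rfl

/-- The coefficients of the binary cubic form `v ↦ c (A v)`. -/
def cubicSubst (A : Matrix (Fin 2) (Fin 2) R) (c : Fin 4 → R) : Fin 4 → R :=
  ![binaryCubic c (A.col 0),
    3 * c 0 * A 0 0 ^ 2 * A 0 1 + c 1 * (A 0 0 ^ 2 * A 1 1 + 2 * A 0 0 * A 0 1 * A 1 0)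
      + c 2 * (A 0 1 * A 1 0 ^ 2 + 2 * A 0 0 * A 1 0 * A 1 1) + 3 * c 3 * A 1 0 ^ 2 * A 1 1,
    3 * c 0 * A 0 0 * A 0 1 ^ 2 + c 1 * (A 0 1 ^ 2 * A 1 0 + 2 * A 0 0 * A 0 1 * A 1 1)
      + c 2 * (A 0 0 * A 1 1 ^ 2 + 2 * A 0 1 * A 1 0 * A 1 1) + 3 * c 3 * A 1 0 * A 1 1 ^ 2,
    binaryCubic c (A.col 1)]

lemma binaryQuadratic_injective :
    Function.Injective (binaryQuadratic : (Fin 3 → R) → (Fin 2 → R) → R) := by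
  intro q q' h
  have h₀ : q 0 = q' 0 := by simpa [binaryQuadratic] using congrFun h ![1, 0]
  have h₂ : q 2 = q' 2 := by simpa [binaryQuadratic] using congrFun h ![0, 1]
  have h₁ : q 1 = q' 1 := by simpa [binaryQuadratic, h₀, h₂] using congrFun h ![1, 1]
  ext i
  fin_cases i <;> assumption

lemma binaryQuadratic_quadraticSubst (A : Matrix (Fin 2) (Fin 2) R) (q : Fin 3 → R)
    (v : Fin 2 → R) :
    binaryQuadratic (quadraticSubst A q) v = binaryQuadratic q (A *ᵥ v) := by
  simp only [binaryQuadratic, quadraticSubst_apply, col_apply, mulVec, dotProduct, Fin.sum_univ_two,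
    cons_val]
  ring

lemma binaryCubic_cubicSubst (A : Matrix (Fin 2) (Fin 2) R) (c : Fin 4 → R) (v : Fin 2 → R) :
    binaryCubic (cubicSubst A c) v = binaryCubic c (A *ᵥ v) := by
  simp only [binaryCubic, cubicSubst, col_apply, mulVec, dotProduct, Fin.sum_univ_two, cons_val]
  ring

lemma quadraticSubst_linearMul (A : Matrix (Fin 2) (Fin 2) R) (l m : Fin 2 → R) :
    quadraticSubst A (linearMul l m) = linearMul (l ᵥ* A) (m ᵥ* A) := by
  ext i
  fin_cases i <;>
    simp [quadraticSubst_apply, binaryQuadratic, linearMul, vecMul, dotProduct] <;> ring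

lemma quadraticDisc_quadraticSubst (A : Matrix (Fin 2) (Fin 2) R) (q : Fin 3 → R) :
    quadraticDisc (quadraticSubst A q) = A.det ^ 2 * quadraticDisc q := by
  simp only [quadraticDisc, quadraticSubst_apply, binaryQuadratic, col_apply, det_fin_two, cons_val]
  ring

lemma quadraticDisc_smul (r : R) (q : Fin 3 → R) :
    quadraticDisc (r • q) = r ^ 2 * quadraticDisc q := by
  simp only [quadraticDisc, Pi.smul_apply, smul_eq_mul]
  ring

lemma cubicHessian_cubicSubst (A : Matrix (Fin 2) (Fin 2) R) (c : Fin 4 → R) :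
    cubicHessian (cubicSubst A c) = A.det ^ 2 • quadraticSubst A (cubicHessian c) := by
  ext i
  fin_cases i <;>
    simp [cubicHessian, cubicSubst, quadraticSubst_apply, binaryQuadratic, binaryCubic,
      det_fin_two] <;>
    ring

lemma transvectant_subst (A : Matrix (Fin 2) (Fin 2) R) (q : Fin 3 → R) (c : Fin 4 → R) :
    transvectant (quadraticSubst A q) (cubicSubst A c) =
      A.det ^ 2 • (transvectant q c ᵥ* A) := by
  ext i
  fin_cases i <;>
    simp [transvectant, cubicSubst, quadraticSubst_apply, binaryQuadratic, binaryCubic,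
      vecMul, dotProduct, det_fin_two] <;>
    ring

lemma linearMul_smul_left (r : R) (l m : Fin 2 → R) :
    linearMul (r • l) m = r • linearMul l m := by
  ext i
  fin_cases i <;> simp [linearMul] <;> ring

lemma hessianResidual_subst (A : Matrix (Fin 2) (Fin 2) R) (m : Fin 2 → R) (q : Fin 3 → R)
    (c : Fin 4 → R) :
    hessianResidual (m ᵥ* A) (quadraticSubst A q) (cubicSubst A c) =
      A.det ^ 2 • quadraticSubst A (hessianResidual m q c) := by
  simp only [hessianResidual, quadraticDisc_quadraticSubst, cubicHessian_cubicSubst,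
    transvectant_subst, linearMul_smul_left, ← quadraticSubst_linearMul, map_sub, map_smul]
  module

lemma cube_add_mul_add_cubes_eq_mul {ω : R} (hω : ω ^ 2 + ω + 1 = 0) (w p s : R) :
    w ^ 3 + w * (-3 * p * s) + (p ^ 3 + s ^ 3) =
      (w + p + s) * (w + ω * p + ω ^ 2 * s) * (w + ω ^ 2 * p + ω * s) := by
  have hω₃ : ω ^ 3 = 1 := by linear_combination (ω - 1) * hω
  linear_combination
    -(w ^ 2 * (p + s) + w * (p ^ 2 + s ^ 2 + 3 * p * s) + ω * p * s * (p + s)) * hω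
      - (p ^ 3 + s ^ 3 + ω * w * p * s + w * (p ^ 2 + s ^ 2) + ω * p * s * (p + s)) * hω₃

/-- The forms `q` and `c` are `-3ps` and `p³ + s³` for linear forms `p`, `s`: this is the shape in
which Cardano's formula solves `w³ + w q + c = 0`. -/
def IsCardanoSplit (q : Fin 3 → R) (c : Fin 4 → R) : Prop :=
  ∃ p s : Fin 2 → R, ∀ v,
    binaryQuadratic q v = -3 * (p ⬝ᵥ v) * (s ⬝ᵥ v) ∧
      binaryCubic c v = (p ⬝ᵥ v) ^ 3 + (s ⬝ᵥ v) ^ 3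

lemma IsCardanoSplit.of_subst {q : Fin 3 → R} {c : Fin 4 → R} {A : Matrix (Fin 2) (Fin 2) R}
    (hA : IsUnit A.det) (h : IsCardanoSplit (quadraticSubst A q) (cubicSubst A c)) :
    IsCardanoSplit q c := by
  obtain ⟨p, s, hps⟩ := h
  refine ⟨p ᵥ* A⁻¹, s ᵥ* A⁻¹, fun v ↦ ?_⟩
  have hv : A *ᵥ A⁻¹ *ᵥ v = v := by rw [mulVec_mulVec, mul_nonsing_inv _ hA, one_mulVec]
  simpa only [binaryQuadratic_quadraticSubst, binaryCubic_cubicSubst, hv, dotProduct_mulVec]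
    using hps (A⁻¹ *ᵥ v)

end BinaryForms

section Field

variable {K : Type*} [Field K] [CharZero K]

lemma coeffs_of_hessianResidual_neg_three_mul_eq_zero {m : Fin 2 → K} {c : Fin 4 → K}
    (hres : hessianResidual m ![0, -3, 0] c = 0)
    (hdisc : quadraticDisc (![0, -3, 0] + (3 : K) • linearMul m m) ≠ 0) :
    c 1 = 0 ∧ c 2 = 0 ∧ c 0 * c 3 = 1 := by
  have h₀ := congrFun hres 0
  have h₁ := congrFun hres 1
  have h₂ := congrFun hres 2
  simp only [hessianResidual, quadraticDisc, cubicHessian, transvectant, linearMul, Pi.sub_apply,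
    Pi.add_apply, Pi.smul_apply, Pi.zero_apply, smul_eq_mul, cons_val] at h₀ h₁ h₂ hdisc
  have hm : 1 - 4 * m 0 * m 1 ≠ 0 := fun h ↦ hdisc (by linear_combination -9 * h)
  -- `transvectant (cubicHessian c) c = 0`, so taking the transvectant of `hres` with `c`
  -- eliminates the Hessian.
  have hc₁ : c 1 = 0 := (mul_eq_zero.mp (by
    linear_combination (c 1 * h₁ - 3 * c 0 * h₂ - (c 2 - 6 * m 1) * h₀) / 27 :
      c 1 * (1 - 4 * m 0 * m 1) = 0)).resolve_right hm
  have hc₂ : c 2 = 0 := (mul_eq_zero.mp (by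
    linear_combination (c 2 * h₁ - 3 * c 3 * h₀ - (c 1 - 6 * m 0) * h₂) / 27 :
      c 2 * (1 - 4 * m 0 * m 1) = 0)).resolve_right hm
  rw [hc₁, hc₂] at h₁
  exact ⟨hc₁, hc₂, by linear_combination -h₁ / 27⟩

lemma coeffs_of_hessianResidual_neg_three_sq_eq_zero {m : Fin 2 → K} {c : Fin 4 → K}
    (hres : hessianResidual m ![-3, 0, 0] c = 0)
    (hdisc : quadraticDisc (![-3, 0, 0] + (3 : K) • linearMul m m) ≠ 0) :
    c 1 = 0 ∧ c 2 = 0 ∧ c 3 = 0 := by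
  have h₀ := congrFun hres 0
  have h₁ := congrFun hres 1
  have h₂ := congrFun hres 2
  simp only [hessianResidual, quadraticDisc, cubicHessian, transvectant, linearMul, Pi.sub_apply,
    Pi.add_apply, Pi.smul_apply, Pi.zero_apply, smul_eq_mul, cons_val] at h₀ h₁ h₂ hdisc
  have hm : m 1 ≠ 0 := fun h ↦ hdisc (by rw [h]; ring)
  have hc₃ : c 3 = 0 := (mul_eq_zero.mp (by
    linear_combination -(c 2 * h₁ - 3 * c 3 * h₀ - (c 1 + 6 * m 1) * h₂) / 324 :
      c 3 * m 1 ^ 2 = 0)).resolve_right (pow_ne_zero 2 hm)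
  have hc₂ : c 2 = 0 := pow_eq_zero_iff two_ne_zero |>.mp (by
    rw [hc₃] at h₂; linear_combination h₂ / 3)
  have hc₁ : c 1 = 0 := pow_eq_zero_iff two_ne_zero |>.mp (by
    rw [hc₂] at h₀; linear_combination h₀ / 3)
  exact ⟨hc₁, hc₂, hc₃⟩

variable [IsAlgClosed K]

lemma exists_subst_eq_neg_three_mul {q : Fin 3 → K} (hq : quadraticDisc q ≠ 0) :
    ∃ A : Matrix (Fin 2) (Fin 2) K, A.det ≠ 0 ∧ quadraticSubst A q = ![0, -3, 0] := by
  by_cases hq₀ : q 0 = 0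
  · have hq₁ : q 1 ≠ 0 := by rintro hq₁; simp [quadraticDisc, hq₀, hq₁] at hq
    refine ⟨!![-3 / q 1 ^ 2, -q 2; 0, q 1], by simp [hq₁], ?_⟩
    ext i
    fin_cases i <;> simp [quadraticSubst_apply, binaryQuadratic, hq₀] <;> field
  · obtain ⟨s, hs⟩ := IsAlgClosed.exists_pow_nat_eq (-quadraticDisc q) two_pos
    have hs₀ : s ≠ 0 := by rintro rfl; apply hq; linear_combination hs
    rw [quadraticDisc] at hs
    refine ⟨!![3 / (4 * q 0 * s ^ 2) * (-q 1 + s), -q 1 - s;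
      3 / (4 * q 0 * s ^ 2) * (2 * q 0), 2 * q 0], ?_, ?_⟩
    · have hdet : (3 : K) / s ≠ 0 := div_ne_zero three_ne_zero hs₀
      rw [det_fin_two_of]
      convert hdet using 1
      field
    ext i
    fin_cases i <;> simp [quadraticSubst_apply, binaryQuadratic] <;> field_simp
    · linear_combination 9 * hs
    · linear_combination 2 * hs
    · linear_combination q 0 * hs

lemma exists_subst_eq_neg_three_sq {q : Fin 3 → K} (hq : q ≠ 0) (hdisc : quadraticDisc q = 0) :
    ∃ A : Matrix (Fin 2) (Fin 2) K, A.det ≠ 0 ∧ quadraticSubst A q = ![-3, 0, 0] := by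
  rw [quadraticDisc] at hdisc
  by_cases hq₀ : q 0 = 0
  · have hq₁ : q 1 = 0 := by simpa [hq₀] using hdisc
    have hq₂ : q 2 ≠ 0 := fun hq₂ ↦ hq (by ext i; fin_cases i <;> assumption)
    obtain ⟨t, ht⟩ := IsAlgClosed.exists_pow_nat_eq (-3 / q 2) two_pos
    have ht₀ : t ≠ 0 :=
      (pow_ne_zero_iff two_ne_zero).mp (ht ▸ div_ne_zero (by simp) hq₂)
    refine ⟨!![0, 1; t, 0], by simpa using ht₀, ?_⟩
    ext i
    fin_cases i <;> simp [quadraticSubst_apply, binaryQuadratic, hq₀, hq₁, ht]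
    field
  · obtain ⟨t, ht⟩ := IsAlgClosed.exists_pow_nat_eq (-3 / q 0) two_pos
    have ht₀ : t ≠ 0 :=
      (pow_ne_zero_iff two_ne_zero).mp (ht ▸ div_ne_zero (by simp) hq₀)
    refine ⟨!![t, -q 1; 0, 2 * q 0], by simp [hq₀, ht₀], ?_⟩
    ext i
    fin_cases i <;> simp [quadraticSubst_apply, binaryQuadratic, ht]
    · field
    · ring
    · linear_combination q 0 * hdisc

lemma exists_ne_zero_cube_add_inv_cube_eq (a : K) :
    ∃ t : K, t ≠ 0 ∧ t ^ 3 + t⁻¹ ^ 3 = a := by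
  obtain ⟨s, hs⟩ := IsAlgClosed.exists_pow_nat_eq (a ^ 2 - 4) two_pos
  obtain ⟨t, ht⟩ := IsAlgClosed.exists_pow_nat_eq ((a + s) / 2) three_pos
  have hz : t ^ 3 * (a - t ^ 3) = 1 := by rw [ht]; linear_combination -hs / 4
  have ht₀ : t ≠ 0 := by rintro rfl; simp at hz
  refine ⟨t, ht₀, ?_⟩
  rw [inv_pow, ← eq_inv_of_mul_eq_one_right hz]
  ring

lemma isCardanoSplit_neg_three_mul {m : Fin 2 → K} {c : Fin 4 → K}
    (hres : hessianResidual m ![0, -3, 0] c = 0)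
    (hdisc : quadraticDisc (![0, -3, 0] + (3 : K) • linearMul m m) ≠ 0) :
    IsCardanoSplit ![0, -3, 0] c := by
  obtain ⟨hc₁, hc₂, hc₀₃⟩ := coeffs_of_hessianResidual_neg_three_mul_eq_zero hres hdisc
  obtain ⟨t, ht⟩ := IsAlgClosed.exists_pow_nat_eq (c 0) three_pos
  have ht₀ : t ≠ 0 := by rintro rfl; simp [← ht] at hc₀₃
  refine ⟨![t, 0], ![0, t⁻¹], fun v ↦ ⟨?_, ?_⟩⟩
  · simp only [binaryQuadratic, dotProduct, Fin.sum_univ_two, cons_val]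
    field
  · simp [binaryCubic, dotProduct, hc₁, hc₂, mul_pow, ht, eq_inv_of_mul_eq_one_right hc₀₃]

lemma isCardanoSplit_neg_three_sq {m : Fin 2 → K} {c : Fin 4 → K}
    (hres : hessianResidual m ![-3, 0, 0] c = 0)
    (hdisc : quadraticDisc (![-3, 0, 0] + (3 : K) • linearMul m m) ≠ 0) :
    IsCardanoSplit ![-3, 0, 0] c := by
  obtain ⟨hc₁, hc₂, hc₃⟩ := coeffs_of_hessianResidual_neg_three_sq_eq_zero hres hdisc
  obtain ⟨t, ht₀, ht⟩ := exists_ne_zero_cube_add_inv_cube_eq (c 0)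
  refine ⟨![t, 0], ![t⁻¹, 0], fun v ↦ ⟨?_, ?_⟩⟩
  · simp only [binaryQuadratic, dotProduct, Fin.sum_univ_two, cons_val]
    field
  · simp [binaryCubic, dotProduct, hc₁, hc₂, hc₃, mul_pow, ← ht, add_mul]

theorem isCardanoSplit_of_hessianResidual_eq_zero {m : Fin 2 → K} {q : Fin 3 → K}
    {c : Fin 4 → K} (hres : hessianResidual m q c = 0)
    (hdisc : quadraticDisc (q + (3 : K) • linearMul m m) ≠ 0) : IsCardanoSplit q c := by
  have res_subst (A : Matrix (Fin 2) (Fin 2) K) :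
      hessianResidual (m ᵥ* A) (quadraticSubst A q) (cubicSubst A c) = 0 := by
    rw [hessianResidual_subst, hres, map_zero, smul_zero]
  have disc_subst {A : Matrix (Fin 2) (Fin 2) K} (hA : A.det ≠ 0) :
      quadraticDisc (quadraticSubst A q + (3 : K) • linearMul (m ᵥ* A) (m ᵥ* A)) ≠ 0 := by
    rw [← quadraticSubst_linearMul, ← map_smul, ← map_add, quadraticDisc_quadraticSubst]
    exact mul_ne_zero (pow_ne_zero 2 hA) hdisc
  have hq : q ≠ 0 := by
    rintro rfl
    apply hdisc
    simp only [quadraticDisc, linearMul, zero_add, Pi.smul_apply, smul_eq_mul, cons_val]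
    ring
  by_cases hΔ : quadraticDisc q = 0
  · obtain ⟨A, hA, hqA⟩ := exists_subst_eq_neg_three_sq hq hΔ
    refine .of_subst hA.isUnit ?_
    have hres := res_subst A
    have hdisc := disc_subst hA
    rw [hqA] at hres hdisc ⊢
    exact isCardanoSplit_neg_three_sq hres hdisc
  · obtain ⟨A, hA, hqA⟩ := exists_subst_eq_neg_three_mul hΔ
    refine .of_subst hA.isUnit ?_
    have hres := res_subst A
    have hdisc := disc_subst hA
    rw [hqA] at hres hdisc ⊢
    exact isCardanoSplit_neg_three_mul hres hdisc

end Field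


section TernaryCubics

variable {R : Type*} [CommRing R]

/-- A ternary cubic form `k x₃³ + l x₃² + q x₃ + c` grouped by powers of the last variable, with
binary forms `l`, `q`, `c` of degrees 1, 2, 3 in the first two variables. -/
def ternaryCubic (k : R) (l : Fin 2 → R) (q : Fin 3 → R) (c : Fin 4 → R) (v : Fin 3 → R) : R :=
  k * v 2 ^ 3 + (l 0 * v 0 + l 1 * v 1) * v 2 ^ 2 + binaryQuadratic q ![v 0, v 1] * v 2 +
    binaryCubic c ![v 0, v 1]

/-- The change of variables `x₃ ↦ x₃ + m(x₁, x₂)` used to complete the cube. -/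
def shear (m : Fin 2 → R) (v : Fin 3 → R) : Fin 3 → R :=
  ![v 0, v 1, v 2 + (m 0 * v 0 + m 1 * v 1)]

lemma shear_neg_shear (m : Fin 2 → R) (v : Fin 3 → R) : shear (-m) (shear m v) = v := by
  ext i
  fin_cases i <;> simp [shear]
  ring

lemma exists_ternaryCubic_shear_eq (k : R) (l m : Fin 2 → R) (q : Fin 3 → R) (c : Fin 4 → R) :
    ∃ c', ∀ v, ternaryCubic k l q c (shear m v) =
      ternaryCubic k (l + (3 * k) • m)
        (q + (2 : R) • linearMul l m + (3 * k) • linearMul m m) c' v := by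
  refine ⟨![c 0 + q 0 * m 0 + l 0 * m 0 ^ 2 + k * m 0 ^ 3,
    c 1 + q 0 * m 1 + q 1 * m 0 + 2 * l 0 * m 0 * m 1 + l 1 * m 0 ^ 2 + 3 * k * m 0 ^ 2 * m 1,
    c 2 + q 1 * m 1 + q 2 * m 0 + 2 * l 1 * m 0 * m 1 + l 0 * m 1 ^ 2 + 3 * k * m 0 * m 1 ^ 2,
    c 3 + q 2 * m 1 + l 1 * m 1 ^ 2 + k * m 1 ^ 3], fun v ↦ ?_⟩
  simp only [ternaryCubic, shear, binaryQuadratic, binaryCubic, linearMul, Pi.add_apply,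
    Pi.smul_apply, smul_eq_mul, cons_val]
  ring

lemma ternaryCubic_smul (r k : R) (l : Fin 2 → R) (q : Fin 3 → R) (c : Fin 4 → R)
    (v : Fin 3 → R) :
    ternaryCubic (r * k) (r • l) (r • q) (r • c) v = r * ternaryCubic k l q c v := by
  simp only [ternaryCubic, binaryQuadratic, binaryCubic, Pi.smul_apply, smul_eq_mul]
  ring

lemma exists_ternaryCubic_eq_mul_depressed {K : Type*} [Field K] [CharZero K] {k : K}
    (hk : k ≠ 0) (l : Fin 2 → K) (q : Fin 3 → K) (c : Fin 4 → K) :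
    ∃ m q' c', ∀ v, ternaryCubic k l q c v = k * ternaryCubic 1 0 q' c' (shear m v) := by
  set m : Fin 2 → K := (3 * k)⁻¹ • l with hm
  obtain ⟨c', hc'⟩ := exists_ternaryCubic_shear_eq k l (-m) q c
  have hl : l + (3 * k) • -m = 0 := by
    rw [hm, smul_neg, smul_inv_smul₀ (by simpa using hk), add_neg_cancel]
  refine ⟨m, k⁻¹ • (q + (2 : K) • linearMul l (-m) + (3 * k) • linearMul (-m) (-m)), k⁻¹ • c',
    fun v ↦ ?_⟩
  rw [← ternaryCubic_smul, mul_one, smul_zero, smul_inv_smul₀ hk, smul_inv_smul₀ hk, ← hl, ← hc',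
    shear_neg_shear]

lemma eq_and_eq_of_ternaryCubic_eq {K : Type*} [Field K] [CharZero K] {k k' : K}
    {l l' : Fin 2 → K} {q q' : Fin 3 → K} {c c' : Fin 4 → K}
    (h : ∀ v, ternaryCubic k l q c v = ternaryCubic k' l' q' c' v) : k = k' ∧ q = q' := by
  have hz (u : Fin 2 → K) (z : K) := h ![u 0, u 1, z]
  simp only [ternaryCubic, cons_val] at hz
  have hk : k = k' := by
    linear_combination (hz 0 2 - 3 * hz 0 1 - hz 0 (-1) + 3 * hz 0 0) / 6
  refine ⟨hk, binaryQuadratic_injective (funext fun u ↦ ?_)⟩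
  have hu : ![u 0, u 1] = u := by ext i; fin_cases i <;> rfl
  subst hk
  rw [← hu]
  linear_combination (hz u 1 - hz u (-1)) / 2

end TernaryCubics

section Coefficients

lemma eval_eq_sum_antidiagonalTuple {R : Type*} [CommSemiring R] {d n : ℕ}
    {f : MvPolynomial (Fin d) R} (hf : f.IsHomogeneous n) (v : Fin d → R) :
    eval v f = ∑ e ∈ Finset.Nat.antidiagonalTuple d n,
      f.coeff (Finsupp.equivFunOnFinite.symm e) * ∏ i, v i ^ e i := by
  rw [eval_eq']
  refine Finset.sum_of_injOn (fun e ↦ ⇑e) DFunLike.coe_injective.injOn ?_ ?_ ?_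
  · intro e he
    rw [Finset.mem_coe, Finset.Nat.mem_antidiagonalTuple,
      hf.degree_eq_sum_deg_support he]
    exact (Finsupp.degree_eq_sum e).symm
  · intro e _ he
    suffices f.coeff (Finsupp.equivFunOnFinite.symm e) = 0 by rw [this, zero_mul]
    by_contra h
    exact he ⟨_, mem_support_iff.mpr h, rfl⟩
  · intro e _
    rw [Finsupp.equivFunOnFinite_symm_coe]

/-- The coefficients of `x₁²x₃`, `x₁x₂x₃`, `x₂²x₃`: the part linear in `x₃` of a cubic form, as a
binary quadratic form. -/
noncomputable def mixedCoeffs {R : Type*} [CommSemiring R] :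
    MvPolynomial (Fin 3) R →ₗ[R] Fin 3 → R where
  toFun f :=
    ![f.coeff (Finsupp.single 0 2 + Finsupp.single 2 1),
      f.coeff (Finsupp.single 0 1 + Finsupp.single 1 1 + Finsupp.single 2 1),
      f.coeff (Finsupp.single 1 2 + Finsupp.single 2 1)]
  map_add' f g := by simp
  map_smul' r f := by simp

lemma mixedCoeffs_eq_zero_iff {R : Type*} [CommSemiring R] {f : MvPolynomial (Fin 3) R} :
    mixedCoeffs f = 0 ↔
      f.coeff (Finsupp.single 0 2 + Finsupp.single 2 1) = 0 ∧
      f.coeff (Finsupp.single 0 1 + Finsupp.single 1 1 + Finsupp.single 2 1) = 0 ∧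
      f.coeff (Finsupp.single 1 2 + Finsupp.single 2 1) = 0 := by
  simp [mixedCoeffs]

lemma exists_eval_eq_ternaryCubic {R : Type*} [CommRing R] {f : MvPolynomial (Fin 3) R}
    (hf : f.IsHomogeneous 3) :
    ∃ l c, ∀ v,
      eval v f = ternaryCubic (f.coeff (Finsupp.single 2 3)) l (mixedCoeffs f) c v := by
  let a (e : Fin 3 → ℕ) : R := f.coeff (Finsupp.equivFunOnFinite.symm e)
  have exponents : Finset.Nat.antidiagonalTuple 3 3 =
      {![0, 0, 3], ![1, 0, 2], ![0, 1, 2], ![2, 0, 1], ![1, 1, 1], ![0, 2, 1],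
        ![3, 0, 0], ![2, 1, 0], ![1, 2, 0], ![0, 3, 0]} := by decide
  have hmixed : mixedCoeffs f = ![a ![2, 0, 1], a ![1, 1, 1], a ![0, 2, 1]] := by
    change ![_, _, _] = _
    congr! 4 <;> · ext i; fin_cases i <;> simp
  have h333 : f.coeff (Finsupp.single 2 3) = a ![0, 0, 3] := by
    unfold a
    congr 1
    ext i
    fin_cases i <;> simp
  refine ⟨![a ![1, 0, 2], a ![0, 1, 2]],
    ![a ![3, 0, 0], a ![2, 1, 0], a ![1, 2, 0], a ![0, 3, 0]], fun v ↦ ?_⟩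
  rw [eval_eq_sum_antidiagonalTuple hf, exponents, hmixed, h333]
  simp [ternaryCubic, binaryQuadratic, binaryCubic, Fin.prod_univ_three, a]
  ring

lemma coeffs_eq_of_eval_eq_ternaryCubic_shear {K : Type*} [Field K] [CharZero K]
    {f : MvPolynomial (Fin 3) K} (hf : f.IsHomogeneous 3) {k : K} {l m : Fin 2 → K}
    {q : Fin 3 → K} {c : Fin 4 → K} (h : ∀ v, eval v f = ternaryCubic k l q c (shear m v)) :
    f.coeff (Finsupp.single 2 3) = k ∧
      mixedCoeffs f = q + (2 : K) • linearMul l m + (3 * k) • linearMul m m := by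
  obtain ⟨l', c', hf'⟩ := exists_eval_eq_ternaryCubic hf
  obtain ⟨c'', hshear⟩ := exists_ternaryCubic_shear_eq k l m q c
  exact eq_and_eq_of_ternaryCubic_eq fun v ↦ by rw [← hf', h, hshear]

end Coefficients

section DepressedCubics

variable {R : Type*} [CommRing R]

/-- The ternary cubic form `w³ + w q + c` with `w = x₃ + m`, the result of completing the cube. -/
noncomputable def depressedCubic (m : Fin 2 → R) (q : Fin 3 → R) (c : Fin 4 → R) :
    MvPolynomial (Fin 3) R :=
  ternaryCubic 1 0 (C ∘ q) (C ∘ c) (shear (C ∘ m) X)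

lemma eval_depressedCubic (m : Fin 2 → R) (q : Fin 3 → R) (c : Fin 4 → R) (v : Fin 3 → R) :
    eval v (depressedCubic m q c) = ternaryCubic 1 0 q c (shear m v) := by
  simp [depressedCubic, ternaryCubic, binaryQuadratic, binaryCubic, shear]

lemma exists_eq_C_mul_depressedCubic {K : Type*} [Field K] [CharZero K]
    {f : MvPolynomial (Fin 3) K} (hf : f.IsHomogeneous 3)
    (h333 : f.coeff (Finsupp.single 2 3) ≠ 0) :
    ∃ m q c, f = C (f.coeff (Finsupp.single 2 3)) * depressedCubic m q c := by
  obtain ⟨l, c, hlc⟩ := exists_eval_eq_ternaryCubic hf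
  obtain ⟨m, q', c', h⟩ := exists_ternaryCubic_eq_mul_depressed h333 l (mixedCoeffs f) c
  refine ⟨m, q', c', funext fun v ↦ ?_⟩
  rw [hlc, h, eval_mul, eval_C, eval_depressedCubic]

/-- The gradient of `w³ + w q + c` in the coordinates `u = (x₁, x₂, w)`. -/
def depressedGradient (q : Fin 3 → R) (c : Fin 4 → R) (u : Fin 3 → R) : Fin 3 → R :=
  ![(2 * q 0 * u 0 + q 1 * u 1) * u 2 + (3 * c 0 * u 0 ^ 2 + 2 * c 1 * u 0 * u 1 + c 2 * u 1 ^ 2),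
    (q 1 * u 0 + 2 * q 2 * u 1) * u 2 + (c 1 * u 0 ^ 2 + 2 * c 2 * u 0 * u 1 + 3 * c 3 * u 1 ^ 2),
    3 * u 2 ^ 2 + binaryQuadratic q ![u 0, u 1]]

/-- The Hessian matrix of `w³ + w q + c` in the coordinates `u = (x₁, x₂, w)`. -/
def depressedHessian (q : Fin 3 → R) (c : Fin 4 → R) (u : Fin 3 → R) :
    Matrix (Fin 3) (Fin 3) R :=
  !![2 * q 0 * u 2 + (6 * c 0 * u 0 + 2 * c 1 * u 1), q 1 * u 2 + (2 * c 1 * u 0 + 2 * c 2 * u 1),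
      2 * q 0 * u 0 + q 1 * u 1;
    q 1 * u 2 + (2 * c 1 * u 0 + 2 * c 2 * u 1), 2 * q 2 * u 2 + (2 * c 2 * u 0 + 6 * c 3 * u 1),
      q 1 * u 0 + 2 * q 2 * u 1;
    2 * q 0 * u 0 + q 1 * u 1, q 1 * u 0 + 2 * q 2 * u 1, 6 * u 2]

/-- The Jacobian matrix of `shear m`. -/
def shearMatrix (m : Fin 2 → R) : Matrix (Fin 3) (Fin 3) R := !![1, 0, 0; 0, 1, 0; m 0, m 1, 1]

lemma det_shearMatrix (m : Fin 2 → R) : (shearMatrix m).det = 1 := by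
  simp [shearMatrix, det_fin_three]

lemma isHomogeneous_depressedCubic (m : Fin 2 → R) (q : Fin 3 → R) (c : Fin 4 → R) :
    (depressedCubic m q c).IsHomogeneous 3 := by
  have hx := isHomogeneous_X R (0 : Fin 3)
  have hy := isHomogeneous_X R (1 : Fin 3)
  have hw : (X 2 + (C (m 0) * X 0 + C (m 1) * X 1) : MvPolynomial (Fin 3) R).IsHomogeneous 1 :=
    (isHomogeneous_X R 2).add ((hx.C_mul _).add (hy.C_mul _))
  have hq : (binaryQuadratic (C ∘ q) ![X 0, X 1] : MvPolynomial (Fin 3) R).IsHomogeneous 2 :=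
    (((hx.pow 2).C_mul _).add ((hx.mul hy).C_mul _)).add ((hy.pow 2).C_mul _)
  have hc : (binaryCubic (C ∘ c) ![X 0, X 1] : MvPolynomial (Fin 3) R).IsHomogeneous 3 :=
    ((((hx.pow 3).C_mul _).add (((hx.pow 2).mul hy).C_mul _)).add
      ((hx.mul (hy.pow 2)).C_mul _)).add ((hy.pow 3).C_mul _)
  simpa [depressedCubic, ternaryCubic, shear] using ((hw.pow 3).add (hq.mul hw)).add hc

lemma pderiv_depressedCubic (m : Fin 2 → R) (q : Fin 3 → R) (c : Fin 4 → R) (j : Fin 3) :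
    pderiv j (depressedCubic m q c) =
      (depressedGradient (C ∘ q) (C ∘ c) (shear (C ∘ m) X) ᵥ* shearMatrix (C ∘ m)) j := by
  fin_cases j <;>
    simp [depressedCubic, depressedGradient, ternaryCubic, binaryQuadratic, binaryCubic, shear,
      shearMatrix, pderiv_X, Derivation.leibniz_pow, vecMul, dotProduct, Fin.sum_univ_three] <;>
    ring

lemma hessian_depressedCubic (m : Fin 2 → R) (q : Fin 3 → R) (c : Fin 4 → R) (v : Fin 3 → R) :
    (of fun i j ↦ eval v (pderiv i (pderiv j (depressedCubic m q c)))) =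
      (shearMatrix m)ᵀ * depressedHessian q c (shear m v) * shearMatrix m := by
  have pderiv_two (i : Fin 3) : pderiv i (2 : MvPolynomial (Fin 3) R) = 0 :=
    (pderiv i).map_natCast 2
  have pderiv_three (i : Fin 3) : pderiv i (3 : MvPolynomial (Fin 3) R) = 0 :=
    (pderiv i).map_natCast 3
  ext i j
  rw [of_apply, pderiv_depressedCubic]
  fin_cases i <;> fin_cases j <;>
    simp [depressedGradient, depressedHessian, binaryQuadratic, shear, shearMatrix, pderiv_X,
      Derivation.leibniz_pow, pderiv_two, pderiv_three, vecMul, dotProduct, mul_apply,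
      Fin.sum_univ_three] <;>
    ring

lemma coeffs_depressedCubic {K : Type*} [Field K] [CharZero K] (m : Fin 2 → K) (q : Fin 3 → K)
    (c : Fin 4 → K) :
    (depressedCubic m q c).coeff (Finsupp.single 2 3) = 1 ∧
      mixedCoeffs (depressedCubic m q c) = q + (3 : K) • linearMul m m := by
  have hzero : linearMul 0 m = 0 := by simpa using linearMul_smul_left 0 0 m
  simpa [hzero] using coeffs_eq_of_eval_eq_ternaryCubic_shear
    (isHomogeneous_depressedCubic m q c) (eval_depressedCubic m q c)

end DepressedCubics

section HessianDeterminant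

lemma hessianDet_C_mul (k : ℂ) (f : MvPolynomial (Fin 3) ℂ) :
    hessianDet (C k * f) = C (k ^ 3) * hessianDet f := by
  have : (Matrix.of fun i j ↦ pderiv i (pderiv j (C k * f))) =
      (C k : MvPolynomial (Fin 3) ℂ) • Matrix.of fun i j ↦ pderiv i (pderiv j f) := by
    ext1 i j
    simp [C_mul']
  rw [hessianDet, this, det_smul, Fintype.card_fin, map_pow, hessianDet]

lemma isHomogeneous_hessianDet {f : MvPolynomial (Fin 3) ℂ} {n : ℕ} (hf : f.IsHomogeneous n) :
    (hessianDet f).IsHomogeneous (3 * (n - 2)) := by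
  have hentry (i j : Fin 3) : (pderiv i (pderiv j f)).IsHomogeneous (n - 2) := hf.pderiv.pderiv
  rw [hessianDet, det_apply]
  refine .sum _ _ _ fun σ _ ↦ ?_
  rw [Units.smul_def, zsmul_eq_mul, ← map_intCast (C : ℂ →+* MvPolynomial (Fin 3) ℂ)]
  refine .C_mul ?_ _
  simpa using IsHomogeneous.prod Finset.univ _ (fun _ ↦ n - 2) fun i _ ↦ hentry (σ i) i

lemma exists_eval_hessianDet_depressedCubic (m : Fin 2 → ℂ) (q : Fin 3 → ℂ) (c : Fin 4 → ℂ) :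
    ∃ b, ∀ v, eval v (hessianDet (depressedCubic m q c)) =
      ternaryCubic (6 * quadraticDisc q) ((24 : ℂ) • transvectant q c)
        ((24 : ℂ) • cubicHessian c - (2 * quadraticDisc q) • q) b (shear m v) := by
  refine ⟨-![8 * q 0 ^ 2 * c 2 - 8 * q 0 * q 1 * c 1 + 6 * q 1 ^ 2 * c 0,
    24 * q 0 ^ 2 * c 3 - 16 * q 0 * q 2 * c 1 - 2 * q 1 ^ 2 * c 1 + 24 * q 1 * q 2 * c 0,
    24 * q 0 * q 1 * c 3 - 2 * q 1 ^ 2 * c 2 - 16 * q 0 * q 2 * c 2 + 24 * q 2 ^ 2 * c 0,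
    6 * q 1 ^ 2 * c 3 - 8 * q 1 * q 2 * c 2 + 8 * q 2 ^ 2 * c 1], fun v ↦ ?_⟩
  have hhess : (eval v).mapMatrix (of fun i j ↦ pderiv i (pderiv j (depressedCubic m q c))) =
      (shearMatrix m)ᵀ * depressedHessian q c (shear m v) * shearMatrix m :=
    hessian_depressedCubic m q c v
  rw [hessianDet, RingHom.map_det, hhess, det_mul, det_mul, det_transpose,
    det_shearMatrix, one_mul, mul_one]
  simp only [det_fin_three, depressedHessian, ternaryCubic, binaryQuadratic, binaryCubic,
    quadraticDisc, transvectant, cubicHessian, of_apply, Pi.sub_apply, Pi.neg_apply, Pi.smul_apply,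
    smul_eq_mul, cons_val]
  ring

/-- The form `g = D₃₃₃ f - f₃₃₃ D`: the member without `x₃³` term of the pencil spanned by `f` and
its Hessian determinant `D`. -/
noncomputable def hessianPencil (f : MvPolynomial (Fin 3) ℂ) : MvPolynomial (Fin 3) ℂ :=
  C ((hessianDet f).coeff (Finsupp.single 2 3)) * f -
    C (f.coeff (Finsupp.single 2 3)) * hessianDet f

lemma hessianPencil_C_mul (k : ℂ) (f : MvPolynomial (Fin 3) ℂ) :
    hessianPencil (C k * f) = C (k ^ 4) * hessianPencil f := by
  rw [hessianPencil, hessianDet_C_mul, coeff_C_mul, coeff_C_mul, hessianPencil]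
  simp only [map_mul, map_pow]
  ring

lemma mixedCoeffs_hessianPencil (f : MvPolynomial (Fin 3) ℂ) :
    mixedCoeffs (hessianPencil f) =
      (hessianDet f).coeff (Finsupp.single 2 3) • mixedCoeffs f -
        f.coeff (Finsupp.single 2 3) • mixedCoeffs (hessianDet f) := by
  rw [hessianPencil, C_mul', C_mul', map_sub, map_smul, map_smul]

lemma mixedCoeffs_hessianPencil_depressedCubic (m : Fin 2 → ℂ) (q : Fin 3 → ℂ) (c : Fin 4 → ℂ) :
    mixedCoeffs (hessianPencil (depressedCubic m q c)) = (8 : ℂ) • hessianResidual m q c := by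
  have hhom := isHomogeneous_depressedCubic m q c
  obtain ⟨b, hb⟩ := exists_eval_hessianDet_depressedCubic m q c
  obtain ⟨hcoeff, hmixed⟩ := coeffs_depressedCubic m q c
  obtain ⟨hdetcoeff, hdetmixed⟩ :=
    coeffs_eq_of_eval_eq_ternaryCubic_shear (isHomogeneous_hessianDet hhom) hb
  rw [mixedCoeffs_hessianPencil, hcoeff, hmixed, hdetcoeff, hdetmixed, hessianResidual,
    linearMul_smul_left]
  module

end HessianDeterminant

section ProductsOfLinearForms

lemma IsLinearForm.exists_pderiv_eq_C {a : MvPolynomial (Fin 3) ℂ} (ha : IsLinearForm a) :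
    ∃ α : Fin 3 → ℂ, ∀ i, pderiv i a = C (α i) :=
  ⟨fun i ↦ (pderiv i a).coeff 0, fun _ ↦
    totalDegree_eq_zero_iff_eq_C.mp ((totalDegree_zero_iff_isHomogeneous _).mpr ha.pderiv)⟩

lemma hessianDet_mul_mul {a b c : MvPolynomial (Fin 3) ℂ} {α β γ : Fin 3 → ℂ}
    (ha : ∀ i, pderiv i a = C (α i)) (hb : ∀ i, pderiv i b = C (β i))
    (hc : ∀ i, pderiv i c = C (γ i)) :
    hessianDet (a * b * c) = C (2 * (of ![α, β, γ]).det ^ 2) * (a * b * c) := by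
  have hhess : (of fun i j ↦ pderiv i (pderiv j (a * b * c))) =
      (C.mapMatrix (of ![α, β, γ]))ᵀ * !![0, c, b; c, 0, a; b, a, 0] *
        C.mapMatrix (of ![α, β, γ]) := by
    ext1 i j
    simp only [ha, hb, hc, Derivation.leibniz, derivation_C, map_add, smul_eq_mul, of_apply,
      RingHom.mapMatrix_apply, mul_apply, transpose_apply, map_apply, Fin.sum_univ_three, cons_val',
      cons_val, cons_val_fin_one]
    ring
  have hmid : det !![0, c, b; c, 0, a; b, a, 0] = 2 * (a * b * c) := by
    simp only [det_fin_three, of_apply, cons_val', cons_val, cons_val_fin_one]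
    ring
  rw [hessianDet, hhess, det_mul, det_mul, det_transpose, ← RingHom.map_det, hmid, map_mul,
    map_pow, map_ofNat]
  ring

lemma CompletelyReducible.hessianPencil_eq_zero {f : MvPolynomial (Fin 3) ℂ}
    (hf : CompletelyReducible f) : hessianPencil f = 0 := by
  obtain ⟨a, b, c, ha, hb, hc, rfl⟩ := hf
  obtain ⟨α, hα⟩ := ha.exists_pderiv_eq_C
  obtain ⟨β, hβ⟩ := hb.exists_pderiv_eq_C
  obtain ⟨γ, hγ⟩ := hc.exists_pderiv_eq_C
  rw [hessianPencil, hessianDet_mul_mul hα hβ hγ, coeff_C_mul, map_mul]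
  ring

/-- The linear form `x₃ + l(x₁, x₂)`, normalised to have `x₃`-coefficient 1. -/
noncomputable def monicLinearForm (l : Fin 2 → ℂ) : MvPolynomial (Fin 3) ℂ :=
  X 2 + (C (l 0) * X 0 + C (l 1) * X 1)

lemma isLinearForm_monicLinearForm (l : Fin 2 → ℂ) : IsLinearForm (monicLinearForm l) :=
  (isHomogeneous_X ℂ 2).add ((isHomogeneous_C_mul_X _ 0).add (isHomogeneous_C_mul_X _ 1))

lemma IsCardanoSplit.completelyReducible {q : Fin 3 → ℂ} {c : Fin 4 → ℂ}
    (h : IsCardanoSplit q c) (k : ℂ) (m : Fin 2 → ℂ) :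
    CompletelyReducible (C k * depressedCubic m q c) := by
  obtain ⟨p, s, hps⟩ := h
  obtain ⟨r, hr⟩ := IsAlgClosed.exists_pow_nat_eq (-3 : ℂ) two_pos
  obtain ⟨ω, hω⟩ : ∃ ω : ℂ, ω ^ 2 + ω + 1 = 0 :=
    ⟨(-1 + r) / 2, by linear_combination hr / 4⟩
  refine ⟨C k * monicLinearForm (m + p + s), monicLinearForm (m + ω • p + ω ^ 2 • s),
    monicLinearForm (m + ω ^ 2 • p + ω • s), (isLinearForm_monicLinearForm _).C_mul k,
    isLinearForm_monicLinearForm _, isLinearForm_monicLinearForm _, funext fun v ↦ ?_⟩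
  obtain ⟨hq, hc⟩ := hps ![v 0, v 1]
  have hcardano := cube_add_mul_add_cubes_eq_mul hω (v 2 + (m 0 * v 0 + m 1 * v 1))
    (p ⬝ᵥ ![v 0, v 1]) (s ⬝ᵥ ![v 0, v 1])
  simp only [← hq, ← hc] at hcardano
  simp only [eval_depressedCubic, ternaryCubic, shear, monicLinearForm, dotProduct,
    Fin.sum_univ_two, cons_val, map_add, map_mul, eval_C, eval_X, Pi.add_apply, Pi.smul_apply,
    Pi.zero_apply, smul_eq_mul] at hcardano ⊢
  linear_combination k * hcardano

end ProductsOfLinearForms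

theorem stmt18 (f : MvPolynomial (Fin 3) ℂ) (hf : f.IsHomogeneous 3)
    (h333 : f.coeff (Finsupp.single 2 3) ≠ 0)
    (hdisc : 4 * f.coeff (Finsupp.single 0 2 + Finsupp.single 2 1) *
        f.coeff (Finsupp.single 1 2 + Finsupp.single 2 1) -
        (f.coeff (Finsupp.single 0 1 + Finsupp.single 1 1 + Finsupp.single 2 1)) ^ 2 ≠ 0) :
    CompletelyReducible f ↔
      ∀ g : MvPolynomial (Fin 3) ℂ,
        g = C ((hessianDet f).coeff (Finsupp.single 2 3)) * f -
              C (f.coeff (Finsupp.single 2 3)) * hessianDet f →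
        g.coeff (Finsupp.single 0 2 + Finsupp.single 2 1) = 0 ∧
        g.coeff (Finsupp.single 0 1 + Finsupp.single 1 1 + Finsupp.single 2 1) = 0 ∧
        g.coeff (Finsupp.single 1 2 + Finsupp.single 2 1) = 0 := by
  change _ ↔ ∀ g, g = hessianPencil f → _
  simp only [forall_eq, ← mixedCoeffs_eq_zero_iff]
  refine ⟨fun h ↦ by rw [h.hessianPencil_eq_zero, map_zero], fun h ↦ ?_⟩
  change quadraticDisc (mixedCoeffs f) ≠ 0 at hdisc
  obtain ⟨m, q, c, hfmqc⟩ := exists_eq_C_mul_depressedCubic hf h333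
  generalize f.coeff (Finsupp.single 2 3) = k at h333 hfmqc
  subst hfmqc
  have hres : hessianResidual m q c = 0 := by
    rw [hessianPencil_C_mul, C_mul', map_smul, mixedCoeffs_hessianPencil_depressedCubic] at h
    simpa [h333] using h
  have hdisc' : quadraticDisc (q + (3 : ℂ) • linearMul m m) ≠ 0 := by
    rw [C_mul', map_smul, (coeffs_depressedCubic m q c).2, quadraticDisc_smul] at hdisc
    exact right_ne_zero_of_mul hdisc
  exact (isCardanoSplit_of_hessianResidual_eq_zero hres hdisc').completelyReducible k m
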